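/- Icicle path lemma: let 1 ≤ m ≤ n and k ≥ 3, and let B be a blue path on m vertices present on the board. Then within 2n − 2m rounds Builder can force either a red C_k or a blue line forest on n vertices with at most k components; that is, r̃_B(C_k, 𝓛^{(≤k)}_n) ≤ 2n − 2m. -/

import Mathlib

open SimpleGraph

/-- A board state: the set of red edges and the set of blue edges. -/
abbrev Board : Type := Set (Sym2 ℕ) × Set (Sym2 ℕ)

/-- The set of already colored edges of a board. -/
def Board.colored (B : Board) : Set (Sym2 ℕ) := B.1 ∪ B.2

/-- A Builder strategy selects an edge given the current board. -/
abbrev BuilderStrat : Type := Board → Sym2 ℕ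

/-- A Painter strategy colors the selected edge (true = red, false = blue). -/
abbrev PainterStrat : Type := Board → Sym2 ℕ → Bool

/-- The board after `t` rounds of play from `init`. -/
def playGame (b : BuilderStrat) (p : PainterStrat) (init : Board) : ℕ → Board
  | 0 => init
  | t + 1 =>
      let B := playGame b p init t
      let e := b B
      if p B e then (insert e B.1, B.2) else (B.1, insert e B.2)

/-- Builder's strategy is valid from `init`: along any play it always selects a
previously unselected non-loop edge. -/
def ValidFrom (b : BuilderStrat) (init : Board) : Prop :=
  ∀ p : PainterStrat, ∀ t : ℕ,
    ¬ (b (playGame b p init t)).IsDiag ∧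
      b (playGame b p init t) ∉ (playGame b p init t).colored

/-- Builder can force the winning condition `W` within `t` rounds, starting from `init`. -/
def BuilderWinsIn (init : Board) (W : Board → Prop) (t : ℕ) : Prop :=
  ∃ b : BuilderStrat, ValidFrom b init ∧
    ∀ p : PainterStrat, ∃ s, s ≤ t ∧ W (playGame b p init s)

/-- `G` contains a copy of `H`. -/
def HasCopy {α β : Type} (H : SimpleGraph α) (G : SimpleGraph β) : Prop :=
  ∃ f : α ↪ β, ∀ x y, H.Adj x y → G.Adj (f x) (f y)

/-- The red part of the board contains a copy of `H`. -/
def RedCopy {α : Type} (H : SimpleGraph α) (B : Board) : Prop :=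
  HasCopy H (fromEdgeSet B.1)

/-- The blue part of the board contains a copy of `H`. -/
def BlueCopy {α : Type} (H : SimpleGraph α) (B : Board) : Prop :=
  HasCopy H (fromEdgeSet B.2)

/-- The empty board. -/
def emptyBoard : Board := (∅, ∅)

/-- Winning condition: a red `C_k` or a blue `C_n`. -/
def WinCC (k n : ℕ) (B : Board) : Prop :=
  RedCopy (cycleGraph k) B ∨ BlueCopy (cycleGraph n) B

/-- Winning condition: a red `C_k` or a blue path on `n` vertices. -/
def WinCP (k n : ℕ) (B : Board) : Prop :=
  RedCopy (cycleGraph k) B ∨ BlueCopy (pathGraph n) B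

/-- A board consisting of a single blue cycle on the vertices `0, …, m-1`. -/
def blueCycleBoard (m : ℕ) : Board :=
  (∅, {e | ∃ i : ℕ, i < m ∧ e = s(i, (i + 1) % m)})

/-- A board consisting of a single blue path on the vertices `0, …, m-1`. -/
def bluePathBoard (m : ℕ) : Board :=
  (∅, {e | ∃ i : ℕ, i + 1 < m ∧ e = s(i, i + 1)})

/-- The blue part of the board contains a line forest on `n` vertices with at most
`k` components. -/
def BlueLineForest (n k : ℕ) (B : Board) : Prop :=
  ∃ t : ℕ, t ≤ k ∧ ∃ (m : Fin t → ℕ) (f : (i : Fin t) → Fin (m i) ↪ ℕ),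
    (∑ i, m i) = n ∧ (∀ i, 1 ≤ m i) ∧
    (∀ (i : Fin t) x y, (SimpleGraph.pathGraph (m i)).Adj x y →
      (SimpleGraph.fromEdgeSet B.2).Adj (f i x) (f i y)) ∧
    (∀ (i j : Fin t) x y, i ≠ j → f i x ≠ f j y)

/-- `Forces W r B`: from `B`, Builder can reach `W` within `r` rounds, whatever Painter does. -/
def Forces (W : Board → Prop) : ℕ → Board → Prop
  | 0, B => W B
  | r + 1, B => W B ∨ ∃ e : Sym2 ℕ, ¬ e.IsDiag ∧ e ∉ B.colored ∧
      Forces W r (insert e B.1, B.2) ∧ Forces W r (B.1, insert e B.2)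

lemma Forces.of_win {W : Board → Prop} {B : Board} (h : W B) (r : ℕ) : Forces W r B := by
  cases r with
  | zero => exact h
  | succ r => exact Or.inl h

lemma exists_fresh_vertex {S : Set (Sym2 ℕ)} (hS : S.Finite) (l : List ℕ) :
    ∃ w, w ∉ l ∧ ∀ e ∈ S, w ∉ e := by
  have h1 : (⋃ e ∈ S, {v | v ∈ e}).Finite := by
    refine hS.biUnion fun e _ => ?_
    induction e with
    | _ a b =>
      refine (Set.toFinite {a, b}).subset fun v hv => ?_
      simpa using hv
  obtain ⟨w, hw⟩ := (h1.union l.finite_toSet).exists_notMem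
  refine ⟨w, fun h => hw (Or.inr h), fun e he hwe => hw (Or.inl ?_)⟩
  simp only [Set.mem_iUnion]
  exact ⟨e, he, hwe⟩

lemma exists_uncolored_edge {B : Board} (hB : B.colored.Finite) :
    ∃ e : Sym2 ℕ, ¬ e.IsDiag ∧ e ∉ B.colored := by
  obtain ⟨w, hw, hwB⟩ := exists_fresh_vertex hB [0]
  refine ⟨s(0, w), ?_, fun h => hwB _ h (by simp)⟩
  simp only [List.mem_singleton] at hw
  simpa [eq_comm] using hw

/-- A Builder strategy that always moves to a position from which the winning condition can be
forced in fewer rounds. -/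
lemma exists_strategy (W : Board → Prop) : ∃ b : BuilderStrat, ∀ B : Board, B.colored.Finite →
    (¬ (b B).IsDiag ∧ b B ∉ B.colored) ∧ ∀ r, Forces W r B → W B ∨ ∃ r' < r,
      Forces W r' (insert (b B) B.1, B.2) ∧ Forces W r' (B.1, insert (b B) B.2) := by
  classical
  suffices h : ∀ B : Board, ∃ e : Sym2 ℕ, B.colored.Finite →
      (¬ e.IsDiag ∧ e ∉ B.colored) ∧ ∀ r, Forces W r B → W B ∨ ∃ r' < r,
        Forces W r' (insert e B.1, B.2) ∧ Forces W r' (B.1, insert e B.2) by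
    choose b hb using h
    exact ⟨b, hb⟩
  intro B
  by_cases hB : B.colored.Finite
  swap
  · exact ⟨s(0, 0), fun h => absurd h hB⟩
  by_cases h : ∃ r, Forces W r B
  · have hmin := fun r (hr : Forces W r B) => Nat.find_min' h hr
    have hfind := Nat.find_spec h
    revert hmin hfind
    generalize Nat.find h = r₀
    intro hmin hfind
    cases r₀ with
    | zero =>
      obtain ⟨e, he⟩ := exists_uncolored_edge hB
      exact ⟨e, fun _ => ⟨he, fun _ _ => Or.inl hfind⟩⟩
    | succ r₁ =>
      rcases hfind with hW | ⟨e, hd, hc, h1, h2⟩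
      · obtain ⟨e, he⟩ := exists_uncolored_edge hB
        exact ⟨e, fun _ => ⟨he, fun _ _ => Or.inl hW⟩⟩
      · exact ⟨e, fun _ => ⟨⟨hd, hc⟩, fun r hr => Or.inr ⟨r₁, hmin r hr, h1, h2⟩⟩⟩
  · obtain ⟨e, he⟩ := exists_uncolored_edge hB
    exact ⟨e, fun _ => ⟨he, fun r hr => absurd ⟨r, hr⟩ h⟩⟩

lemma colored_insert_red_finite {B : Board} (hB : B.colored.Finite) (e : Sym2 ℕ) :
    (Board.colored (insert e B.1, B.2)).Finite := by
  unfold Board.colored at *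
  rw [Set.finite_union] at *
  exact ⟨hB.1.insert e, hB.2⟩

lemma colored_insert_blue_finite {B : Board} (hB : B.colored.Finite) (e : Sym2 ℕ) :
    (Board.colored (B.1, insert e B.2)).Finite := by
  unfold Board.colored at *
  rw [Set.finite_union] at *
  exact ⟨hB.1, hB.2.insert e⟩

lemma playGame_colored_finite (b : BuilderStrat) (p : PainterStrat) {init : Board}
    (h : init.colored.Finite) (t : ℕ) : (playGame b p init t).colored.Finite := by
  induction t with
  | zero => exact h
  | succ t ih =>
    simp only [playGame]
    split_ifs
    · exact colored_insert_red_finite ih _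
    · exact colored_insert_blue_finite ih _

lemma BuilderWinsIn.of_forces {W : Board → Prop} {init : Board} {T : ℕ}
    (hfin : init.colored.Finite) (h : Forces W T init) : BuilderWinsIn init W T := by
  obtain ⟨b, hb⟩ := exists_strategy W
  refine ⟨b, fun p t => (hb _ (playGame_colored_finite b p hfin t)).1, fun p => ?_⟩
  have key : ∀ t, (∃ s ≤ T, W (playGame b p init s)) ∨
      ∃ r, r + t ≤ T ∧ Forces W r (playGame b p init t) := by
    intro t
    induction t with
    | zero => exact Or.inr ⟨T, le_rfl, h⟩
    | succ t ih =>
      rcases ih with ih | ⟨r, hr, hF⟩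
      · exact Or.inl ih
      rcases (hb _ (playGame_colored_finite b p hfin t)).2 r hF with hW | ⟨r', hr', h1, h2⟩
      · exact Or.inl ⟨t, by omega, hW⟩
      · refine Or.inr ⟨r', by omega, ?_⟩
        simp only [playGame]
        split_ifs
        · exact h1
        · exact h2
  rcases key (T + 1) with h | ⟨r, hr, -⟩
  · exact h
  · omega

/-- The edges joining consecutive entries of a list. -/
def pathEdges : List ℕ → Set (Sym2 ℕ)
  | [] => ∅
  | [_] => ∅
  | x :: y :: l => insert s(x, y) (pathEdges (y :: l))

lemma pathEdges_reverse_append (xs : List ℕ) (x : ℕ) (l : List ℕ) :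
    pathEdges (xs.reverse ++ x :: l) = pathEdges (x :: xs) ∪ pathEdges (x :: l) := by
  induction xs generalizing x l with
  | nil => simp [pathEdges]
  | cons y ys ih =>
    rw [List.reverse_cons, List.append_assoc, List.singleton_append, ih]
    simp only [pathEdges]
    rw [Sym2.eq_swap, Set.union_insert, Set.insert_union]

lemma mem_of_mem_pathEdges {l : List ℕ} {e : Sym2 ℕ} (he : e ∈ pathEdges l) {v : ℕ}
    (hv : v ∈ e) : v ∈ l := by
  induction l with
  | nil => exact absurd he (by simp [pathEdges])
  | cons x l ih =>
    cases l with
    | nil => exact absurd he (by simp [pathEdges])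
    | cons y l =>
      rcases he with rfl | he
      · rcases Sym2.mem_iff.1 hv with rfl | rfl <;> simp
      · exact List.mem_cons_of_mem _ (ih he)

lemma getElem_mem_pathEdges (l : List ℕ) (i : ℕ) (h : i + 1 < l.length) :
    s(l[i], l[i + 1]) ∈ pathEdges l := by
  induction l generalizing i with
  | nil => simp at h
  | cons x l ih =>
    cases l with
    | nil => simp at h
    | cons y l =>
      cases i with
      | zero => exact Or.inl rfl
      | succ i => exact Or.inr (ih i (by simpa using h))

lemma pathEdges_range' (a m : ℕ) :
    pathEdges (List.range' a m) = {e | ∃ i, a ≤ i ∧ i + 1 < a + m ∧ e = s(i, i + 1)} := by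
  induction m generalizing a with
  | zero =>
    ext e
    simp only [List.range'_zero, pathEdges, Set.mem_empty_iff_false, Set.mem_ofPred_eq, false_iff]
    rintro ⟨i, h1, h2, -⟩
    omega
  | succ m ih =>
    cases m with
    | zero =>
      ext e
      simp only [List.range'_succ, List.range'_zero, pathEdges, Set.mem_empty_iff_false,
        Set.mem_ofPred_eq, false_iff]
      rintro ⟨i, h1, h2, -⟩
      omega
    | succ m =>
      have h := ih (a + 1)
      rw [List.range'_succ] at h
      rw [List.range'_succ, List.range'_succ, pathEdges, h]
      ext e
      simp only [Set.mem_insert_iff, Set.mem_ofPred_eq]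
      constructor
      · rintro (rfl | ⟨i, h1, h2, rfl⟩)
        · exact ⟨a, le_rfl, by omega, rfl⟩
        · exact ⟨i, by omega, by omega, rfl⟩
      · rintro ⟨i, h1, h2, rfl⟩
        rcases h1.eq_or_lt with rfl | h1
        · exact Or.inl rfl
        · exact Or.inr ⟨i, h1, by omega, rfl⟩

/-- The vertex list of a family of paths, each given by its first vertex and the list of the
others. -/
def forestVerts (L : List (ℕ × List ℕ)) : List ℕ := L.flatMap fun p => p.1 :: p.2

@[simp] lemma forestVerts_nil : forestVerts [] = [] := rfl

@[simp] lemma forestVerts_cons (p : ℕ × List ℕ) (L : List (ℕ × List ℕ)) :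
    forestVerts (p :: L) = p.1 :: (p.2 ++ forestVerts L) := rfl

/-- The edge set of a family of paths. -/
def forestEdges (L : List (ℕ × List ℕ)) : Set (Sym2 ℕ) :=
  {e | ∃ p ∈ L, e ∈ pathEdges (p.1 :: p.2)}

lemma forestEdges_cons (p : ℕ × List ℕ) (L : List (ℕ × List ℕ)) :
    forestEdges (p :: L) = pathEdges (p.1 :: p.2) ∪ forestEdges L := by
  ext e
  simp [forestEdges]

/-- The blue edges of the board form exactly the line forest described by `L`. -/
structure IsBlueForest (B : Board) (L : List (ℕ × List ℕ)) : Prop where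
  blue : B.2 = forestEdges L
  nodup : (forestVerts L).Nodup
  finite : B.colored.Finite

namespace IsBlueForest

variable {B : Board} {L : List (ℕ × List ℕ)}

lemma insert_red (h : IsBlueForest B L) (e : Sym2 ℕ) : IsBlueForest (insert e B.1, B.2) L :=
  ⟨h.blue, h.nodup, colored_insert_red_finite h.finite e⟩

lemma cons_singleton (h : IsBlueForest B L) {w : ℕ} (hw : w ∉ forestVerts L) :
    IsBlueForest B ((w, []) :: L) := by
  refine ⟨?_, ?_, h.finite⟩
  · rw [forestEdges_cons, h.blue]
    simp [pathEdges]
  · simpa using ⟨hw, h.nodup⟩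

lemma perm (h : IsBlueForest B L) {L' : List (ℕ × List ℕ)} (hL : L.Perm L') :
    IsBlueForest B L' := by
  refine ⟨?_, (hL.flatMap_right _).nodup_iff.1 h.nodup, h.finite⟩
  rw [h.blue]
  ext e
  simp only [forestEdges, Set.mem_ofPred_eq, hL.mem_iff]

lemma join {x y z : ℕ} {xs ys zs : List ℕ} (h : IsBlueForest B ((x, xs) :: (y, ys) :: L))
    (hz : z :: zs = xs.reverse ++ x :: y :: ys) :
    IsBlueForest (B.1, insert s(x, y) B.2) ((z, zs) :: L) := by
  refine ⟨?_, ?_, colored_insert_blue_finite h.finite _⟩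
  · simp only [h.blue, forestEdges_cons, hz, pathEdges_reverse_append, pathEdges]
    rw [Set.union_insert, Set.insert_union, Set.union_assoc]
  · have h2 := h.nodup
    simp only [forestVerts_cons] at h2 ⊢
    rw [← List.cons_append, hz]
    refine (List.Perm.nodup_iff ?_).1 h2
    have : (x :: xs).Perm (xs.reverse ++ [x]) := by
      rw [← List.reverse_cons]
      exact (List.reverse_perm _).symm
    simpa using this.append_right (y :: (ys ++ forestVerts L))

lemma not_mem_blue {p q : ℕ × List ℕ} (h : IsBlueForest B (p :: q :: L)) :
    s(p.1, q.1) ∉ B.2 := by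
  rw [h.blue, forestEdges_cons, forestEdges_cons]
  have hnd := h.nodup
  simp only [forestVerts_cons] at hnd
  rintro (he | he | ⟨r, hr, he⟩)
  · have h1 := mem_of_mem_pathEdges he (Sym2.mem_mk_right _ _)
    rw [← List.cons_append] at hnd
    exact (List.disjoint_of_nodup_append hnd) h1 (by simp)
  · have h1 := mem_of_mem_pathEdges he (Sym2.mem_mk_left _ _)
    rw [← List.cons_append] at hnd
    refine (List.disjoint_of_nodup_append hnd) (a := p.1) (by simp) ?_
    rw [← List.cons_append]
    exact List.mem_append_left _ h1
  · have h1 := mem_of_mem_pathEdges he (Sym2.mem_mk_left _ _)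
    refine (List.nodup_cons.1 hnd).1 ?_
    have : p.1 ∈ forestVerts L := List.mem_flatMap.2 ⟨r, hr, h1⟩
    simp [this]

lemma head_ne {p q : ℕ × List ℕ} (h : IsBlueForest B (p :: q :: L)) : p.1 ≠ q.1 := by
  have hnd := h.nodup
  simp only [forestVerts_cons] at hnd
  intro he
  exact (List.nodup_cons.1 hnd).1 (by simp [he])

end IsBlueForest

lemma exists_trimmed_forest (L : List (ℕ × List ℕ)) (n : ℕ) (hn : n ≤ (forestVerts L).length) :
    ∃ L' : List (List ℕ), L'.length ≤ L.length ∧ L'.flatten.length = n ∧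
      L'.flatten.Sublist (forestVerts L) ∧
      ∀ l ∈ L', l ≠ [] ∧ ∃ p ∈ L, l <+: p.1 :: p.2 := by
  induction L generalizing n with
  | nil => exact ⟨[], by simp, by simpa [eq_comm] using hn, by simp, by simp⟩
  | cons p L ih =>
    by_cases h : n ≤ (p.1 :: p.2).length
    · rcases Nat.eq_zero_or_pos n with rfl | hpos
      · exact ⟨[], by simp, by simp, by simp, by simp⟩
      · refine ⟨[(p.1 :: p.2).take n], by simp, by simpa using h, ?_, ?_⟩
        · rw [forestVerts_cons, ← List.cons_append, List.flatten_singleton]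
          exact (List.take_sublist _ _).trans (List.sublist_append_left _ _)
        · intro l hl
          rw [List.mem_singleton] at hl
          subst hl
          refine ⟨?_, p, by simp, List.take_prefix _ _⟩
          rw [← List.length_pos_iff, List.length_take]
          simp [hpos]
    · simp only [forestVerts_cons, List.length_cons, List.length_append] at hn h
      obtain ⟨L', h1, h2, h3, h4⟩ := ih (n - (p.2.length + 1)) (by omega)
      refine ⟨(p.1 :: p.2) :: L', by simpa using h1, ?_, ?_, ?_⟩
      · simp only [List.flatten_cons, List.length_append, List.length_cons]
        omega
      · rw [forestVerts_cons, ← List.cons_append, List.flatten_cons]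
        exact List.Sublist.append (List.Sublist.refl _) h3
      · intro l hl
        rcases List.mem_cons.1 hl with rfl | hl
        · exact ⟨by simp, p, by simp, List.prefix_refl _⟩
        · obtain ⟨h5, q, hq, h6⟩ := h4 l hl
          exact ⟨h5, q, List.mem_cons_of_mem _ hq, h6⟩

lemma IsBlueForest.blueLineForest {B : Board} {L : List (ℕ × List ℕ)} (h : IsBlueForest B L)
    {n k : ℕ} (hk : L.length ≤ k) (hn : n ≤ (forestVerts L).length) : BlueLineForest n k B := by
  obtain ⟨L', h1, h2, h3, h4⟩ := exists_trimmed_forest L n hn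
  have hnd := h3.nodup h.nodup
  rw [List.nodup_flatten] at hnd
  refine ⟨L'.length, h1.trans hk, fun i => (L'.get i).length,
    fun i => ⟨(L'.get i).get, (hnd.1 _ (L'.get_mem i)).injective_get⟩, ?_, ?_, ?_, ?_⟩
  · rw [← h2, List.length_flatten, ← List.sum_ofFn]
    congr 1
    apply List.ext_getElem <;> simp
  · intro i
    exact List.length_pos_iff.2 (h4 _ (L'.get_mem i)).1
  · intro i x y hxy
    obtain ⟨-, p, hp, hpre⟩ := h4 _ (L'.get_mem i)
    have key : ∀ a b : Fin (L'.get i).length, a.val + 1 = b.val →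
        s((L'.get i).get a, (L'.get i).get b) ∈ B.2 := by
      intro a b hab
      rw [h.blue]
      refine ⟨p, hp, ?_⟩
      have hlen := hpre.length_le
      have e1 : (L'.get i).get a = (p.1 :: p.2)[a.val]'(a.2.trans_le hlen) :=
        hpre.getElem a.2
      have e2 : (L'.get i).get b = (p.1 :: p.2)[a.val + 1]'(by omega) := by
        simp only [hab]
        exact hpre.getElem b.2
      rw [e1, e2]
      exact getElem_mem_pathEdges _ _ _
    rw [SimpleGraph.fromEdgeSet_adj]
    refine ⟨?_, fun he => hxy.ne ((hnd.1 _ (L'.get_mem i)).injective_get he)⟩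
    rcases SimpleGraph.pathGraph_adj.1 hxy with h | h
    · exact key x y h
    · rw [Sym2.eq_swap]
      exact key y x h
  · intro i j x y hij he
    have hd : ∀ a b : Fin L'.length, a < b → List.Disjoint (L'.get a) (L'.get b) :=
      fun a b hab => List.pairwise_iff_get.1 hnd.2 a b hab
    have hx : (L'.get i).get x ∈ L'.get i := List.get_mem _ _
    have hy : (L'.get j).get y ∈ L'.get j := List.get_mem _ _
    change (L'.get i).get x = (L'.get j).get y at he
    rcases lt_or_gt_of_ne hij with h | h
    · exact hd i j h hx (he ▸ hy)
    · exact hd j i h hy (he ▸ hx)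

lemma redCopy_cycleGraph_of_list {B : Board} {k : ℕ} (hk : 3 ≤ k) (vs : List ℕ)
    (hlen : vs.length = k) (hnd : vs.Nodup) (hchain : vs.IsChain fun x y => s(x, y) ∈ B.1)
    (hclose : s(vs[0]'(by omega), vs[k - 1]'(by omega)) ∈ B.1) :
    RedCopy (SimpleGraph.cycleGraph k) B := by
  subst hlen
  obtain ⟨j, hj⟩ : ∃ j, vs.length = j + 3 := ⟨vs.length - 3, by omega⟩
  have key : ∀ u v : Fin vs.length, (u - v).val = 1 → s(vs.get u, vs.get v) ∈ B.1 := by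
    intro u v huv
    rw [Fin.sub_def] at huv
    simp only at huv
    have hu := u.2
    have hv := v.2
    rcases Nat.lt_or_ge (vs.length - v.val + u.val) vs.length with hlt | hge
    · rw [Nat.mod_eq_of_lt hlt] at huv
      have hu0 : u = ⟨0, by omega⟩ := Fin.ext (by simp only; omega)
      have hv0 : v = ⟨vs.length - 1, by omega⟩ := Fin.ext (by simp only; omega)
      rw [hu0, hv0]
      exact hclose
    · rw [Nat.mod_eq_sub_mod hge, Nat.mod_eq_of_lt (by omega)] at huv
      have hu1 : u = ⟨v.val + 1, by omega⟩ := Fin.ext (by simp only; omega)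
      rw [hu1, Sym2.eq_swap]
      exact List.isChain_iff_getElem.1 hchain v.val (by omega)
  refine ⟨⟨vs.get, hnd.injective_get⟩, fun x y hxy => ?_⟩
  rw [SimpleGraph.fromEdgeSet_adj]
  refine ⟨?_, fun he => hxy.ne (hnd.injective_get he)⟩
  rcases SimpleGraph.cycleGraph_adj'.1 hxy with h | h
  · exact key x y h
  · rw [Sym2.eq_swap]
    exact key y x h

/-- The first vertices of consecutive paths of `L` are joined by red edges. -/
def RedHeads (B : Board) (L : List (ℕ × List ℕ)) : Prop :=
  L.IsChain fun p q => s(p.1, q.1) ∈ B.1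

lemma RedHeads.insert_red {B : Board} {L : List (ℕ × List ℕ)} (h : RedHeads B L) (e : Sym2 ℕ) :
    RedHeads (insert e B.1, B.2) L :=
  List.IsChain.imp (fun _ _ h => Or.inr h) h

lemma RedHeads.cons_insert_red {B : Board} {p q : ℕ × List ℕ} {L : List (ℕ × List ℕ)}
    (h : RedHeads B (q :: L)) : RedHeads (insert s(p.1, q.1) B.1, B.2) (p :: q :: L) :=
  List.isChain_cons_cons.2 ⟨Or.inl rfl, h.insert_red _⟩

lemma redCopy_cycleGraph_of_redHeads {B : Board} {L : List (ℕ × List ℕ)} {p q : ℕ × List ℕ}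
    (h : IsBlueForest B (p :: (L ++ [q]))) (hred : RedHeads B (p :: (L ++ [q])))
    (hL : 1 ≤ L.length) :
    RedCopy (SimpleGraph.cycleGraph (L.length + 2)) (insert s(p.1, q.1) B.1, B.2) := by
  refine redCopy_cycleGraph_of_list (by omega) ((p :: (L ++ [q])).map Prod.fst) (by simp) ?_ ?_ ?_
  · refine h.nodup.sublist ?_
    generalize p :: (L ++ [q]) = M
    induction M with
    | nil => simp
    | cons r M ih =>
      rw [List.map_cons, forestVerts_cons]
      exact (ih.trans (List.sublist_append_right _ _)).cons_cons _
  · rw [List.isChain_map]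
    exact hred.insert_red _
  · left
    simp

lemma builder_forces {k n : ℕ} (hk : 3 ≤ k) (r : ℕ) :
    (∀ (B : Board) (L : List (ℕ × List ℕ)), L ≠ [] → L.length < k → IsBlueForest B L →
      RedHeads B L → 2 * n + L.length ≤ 2 * (forestVerts L).length + r + 1 →
      Forces (fun B => RedCopy (SimpleGraph.cycleGraph k) B ∨ BlueLineForest n k B) r B) ∧
    (∀ (B : Board) (Q : ℕ × List ℕ) (L : List (ℕ × List ℕ)), (Q :: L).length < k →
      IsBlueForest B (Q :: L) → RedHeads B L →
      2 * n + (Q :: L).length ≤ 2 * (forestVerts (Q :: L)).length + r →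
      Forces (fun B => RedCopy (SimpleGraph.cycleGraph k) B ∨ BlueLineForest n k B) r B) := by
  induction r using Nat.strong_induction_on with
  | _ r ih =>
  have hS : ∀ (B : Board) (L : List (ℕ × List ℕ)), L ≠ [] → L.length < k → IsBlueForest B L →
      RedHeads B L → 2 * n + L.length ≤ 2 * (forestVerts L).length + r + 1 →
      Forces (fun B => RedCopy (SimpleGraph.cycleGraph k) B ∨ BlueLineForest n k B) r B := by
    intro B L hne hlt hB hred hr
    by_cases hwin : n ≤ (forestVerts L).length
    · exact Forces.of_win (Or.inr (hB.blueLineForest hlt.le hwin)) r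
    obtain ⟨⟨x, xs⟩, L, rfl⟩ := List.exists_cons_of_ne_nil hne
    obtain ⟨r, rfl⟩ : ∃ r', r = r' + 2 := ⟨r - 2, by simp only [List.length_cons] at hr; omega⟩
    obtain ⟨w, hwL, hwB⟩ := exists_fresh_vertex hB.finite (forestVerts ((x, xs) :: L))
    have hBw := hB.cons_singleton hwL
    refine Or.inr ⟨s(w, x), by simpa using hBw.head_ne,
      fun h => hwB _ h (by simp), ?_, ?_⟩
    · have hBr := hBw.insert_red s(w, x)
      have hredw : RedHeads (insert s(w, x) B.1, B.2) ((w, []) :: (x, xs) :: L) :=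
        hred.cons_insert_red (p := (w, []))
      by_cases hk' : L.length + 2 < k
      · refine (ih (r + 1) (by omega)).1 _ _ (by simp) (by simpa using hk') hBr hredw ?_
        simp only [forestVerts_cons, List.length_cons, List.length_append, List.length_nil] at hr ⊢
        omega
      · have hLk : L.length + 2 = k := by
          simp only [List.length_cons] at hlt
          omega
        obtain ⟨M, ⟨y, ys⟩, rfl⟩ : ∃ M q, L = M ++ [q] := by
          rcases L.eq_nil_or_concat with rfl | ⟨M, q, h⟩
          · simp at hLk
            omega
          · exact ⟨M, q, by simpa using h⟩
        have hperm : ((w, []) :: (x, xs) :: (M ++ [(y, ys)])).Perm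
            ((w, []) :: (y, ys) :: (x, xs) :: M) := by
          refine List.Perm.cons _ ?_
          simpa using (List.perm_append_comm : ((x, xs) :: M ++ [(y, ys)]).Perm _)
        have hBp := hBr.perm hperm
        have hxy : s(x, y) ≠ s(x, x) := by
          have := (hB.perm (L' := (x, xs) :: (y, ys) :: M)
            (List.Perm.cons _ (List.perm_append_comm))).head_ne
          simpa using this.symm
        refine Or.inr ⟨s(w, y), by simpa using hBp.head_ne, ?_, ?_, ?_⟩
        · rintro ((h | h) | h)
          · apply hxy
            have := Sym2.congr_right.1 h
            rw [this]
          · exact hwB _ (Or.inl h) (by simp)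
          · exact hwB _ (Or.inr h) (by simp)
        · refine Forces.of_win (Or.inl ?_) r
          have := redCopy_cycleGraph_of_redHeads (p := (w, [])) (q := (y, ys)) (L := (x, xs) :: M)
            hBr hredw (by simp)
          simp only [List.length_cons, List.length_append, List.length_nil] at this hLk
          rw [← hLk]
          exact this
        · have hBj := hBp.join (z := w) (zs := y :: ys) rfl
          refine (ih r (by omega)).1 _ ((w, y :: ys) :: (x, xs) :: M) (by simp) ?_ hBj ?_ ?_
          · simp only [List.length_cons, List.length_append, List.length_nil] at hLk ⊢
            omega
          · have h2 : RedHeads B ((x, xs) :: M) :=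
              List.IsChain.left_of_append (l₂ := [(y, ys)]) hred
            exact h2.cons_insert_red (p := (w, y :: ys))
          · simp only [forestVerts, List.flatMap_cons, List.flatMap_append, List.flatMap_nil,
              List.length_cons, List.length_append, List.length_nil] at hr ⊢
            omega
    · have hBj := hBw.join (z := w) (zs := x :: xs) rfl
      refine (ih (r + 1) (by omega)).2 _ (w, x :: xs) L (by simpa using hlt) hBj
        (List.IsChain.tail hred) ?_
      simp only [forestVerts_cons, List.length_cons, List.length_append] at hr ⊢
      omega
  refine ⟨hS, ?_⟩
  rintro B ⟨x, xs⟩ L hlt hB hred hr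
  by_cases hwin : n ≤ (forestVerts ((x, xs) :: L)).length
  · exact Forces.of_win (Or.inr (hB.blueLineForest hlt.le hwin)) r
  cases L with
  | nil => exact hS B _ (by simp) hlt hB (List.isChain_singleton _) (by omega)
  | cons q L =>
    obtain ⟨y, ys⟩ := q
    by_cases hxy : s(x, y) ∈ B.1
    · exact hS B _ (by simp) hlt hB (List.isChain_cons_cons.2 ⟨hxy, hred⟩) (by omega)
    obtain ⟨r, rfl⟩ : ∃ r', r = r' + 1 := ⟨r - 1, by simp only [List.length_cons] at hr; omega⟩
    refine Or.inr ⟨s(x, y), by simpa using hB.head_ne, ?_, ?_, ?_⟩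
    · rintro (h | h)
      · exact hxy h
      · exact hB.not_mem_blue h
    · exact (ih r (by omega)).1 _ _ (by simp) hlt (hB.insert_red _)
        (hred.cons_insert_red (p := (x, xs))) (by omega)
    · obtain ⟨z, zs, hz⟩ := List.exists_cons_of_ne_nil
        (l := xs.reverse ++ x :: y :: ys) (by simp)
      have hlen := congrArg List.length hz
      refine (ih r (by omega)).2 _ (z, zs) L ?_ (hB.join hz.symm) (List.IsChain.tail hred) ?_
      · simp only [List.length_cons] at hlt ⊢
        omega
      · simp only [forestVerts_cons, List.length_cons, List.length_append, List.length_reverse]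
          at hr hlen ⊢
        omega

lemma isBlueForest_bluePathBoard {m : ℕ} (hm : 1 ≤ m) :
    IsBlueForest (bluePathBoard m) [(0, List.range' 1 (m - 1))] := by
  have hrange : 0 :: List.range' 1 (m - 1) = List.range' 0 m := by
    obtain ⟨j, rfl⟩ : ∃ j, m = j + 1 := ⟨m - 1, by omega⟩
    rw [List.range'_succ]
    simp
  refine ⟨?_, ?_, ?_⟩
  · rw [forestEdges_cons, hrange, pathEdges_range']
    simp [bluePathBoard, forestEdges]
  · rw [forestVerts_cons, forestVerts_nil, List.append_nil, hrange]
    exact List.nodup_range'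
  · refine ((Set.finite_Iio m).image fun i => s(i, i + 1)).subset ?_
    rintro e (h | ⟨i, hi, rfl⟩)
    · exact absurd h (Set.notMem_empty e)
    · exact ⟨i, by simp only [Set.mem_Iio]; omega, rfl⟩

/-- Icicle path lemma: for `1 ≤ m ≤ n` and `k ≥ 3`, starting from a blue path on `m`
vertices, within `2n - 2m` rounds Builder can force a red `C_k` or a blue line forest
on `n` vertices with at most `k` components. -/
theorem icicle_path_lemma (k m n : ℕ) (hm : 1 ≤ m) (hmn : m ≤ n) (hk : 3 ≤ k) :
    BuilderWinsIn (bluePathBoard m)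
      (fun B => RedCopy (SimpleGraph.cycleGraph k) B ∨ BlueLineForest n k B)
      (2 * n - 2 * m) := by
  have hB := isBlueForest_bluePathBoard hm
  refine BuilderWinsIn.of_forces hB.finite ((builder_forces hk _).1 _ _ (by simp) ?_ hB
    (List.isChain_singleton _) ?_)
  · simp only [List.length_singleton]
    omega
  · simp only [forestVerts_cons, forestVerts_nil, List.append_nil, List.length_cons,
      List.length_nil, List.length_range']
    omega
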